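/- arXiv:1706.03163 — 5 statements merged into one kernel-verified Lean document; each statement's English description precedes it below -/
import Mathlib

section
/- Let (X, d) be a metric space, let x₀ ∈ X, and let u : X → ℝ be a function with u(x₀) > 0 which is bounded above on the closed ball of radius 2 around x₀. Set A = (1/100)·√(u(x₀)). Then there exists a point y in the closed ball of radius 1 around x₀ such that, writing Q = u(y), one has Q ≥ u(x₀), the open ball of radius A·Q^{-1/2} around y is contained in the open ball of radius 2 around x₀, and u(x) ≤ 2Q for every x in the open ball of radius A·Q^{-1/2} around y. -/
/-- Perelman's point-picking technique, stated purely metrically. -/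
theorem point_picking {X : Type*} [MetricSpace X] (x₀ : X) (u : X → ℝ)
    (hpos : 0 < u x₀) (hbdd : BddAbove (u '' Metric.closedBall x₀ 2)) :
    ∃ y ∈ Metric.closedBall x₀ 1,
      u x₀ ≤ u y ∧
      Metric.ball y ((1 / 100) * Real.sqrt (u x₀) * (u y) ^ (-(1 / 2) : ℝ)) ⊆
        Metric.ball x₀ 2 ∧
      ∀ x ∈ Metric.ball y ((1 / 100) * Real.sqrt (u x₀) * (u y) ^ (-(1 / 2) : ℝ)),
        u x ≤ 2 * u y := by
  have hr : ∀ y, u x₀ ≤ u y → (1 / 100) * Real.sqrt (u x₀) * (u y) ^ (-(1 / 2) : ℝ)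
      = (1 / 100) * Real.sqrt (u x₀) * (Real.sqrt (u y))⁻¹ := by
    intro y hy
    rw [Real.rpow_neg (by linarith), Real.sqrt_eq_rpow (u y)]
  by_contra! H
  obtain ⟨M, hM⟩ := hbdd
  have hs0 : 0 < Real.sqrt (u x₀) := Real.sqrt_pos.2 hpos
  have key : ∀ n : ℕ, ∃ y, 2 ^ n * u x₀ ≤ u y ∧ u x₀ ≤ u y ∧
      dist y x₀ + 10 * ((1 / 100) * Real.sqrt (u x₀) * (Real.sqrt (u y))⁻¹) ≤ 1 / 10 := by
    intro n
    induction n with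
    | zero =>
      refine ⟨x₀, by simp, le_rfl, ?_⟩
      rw [mul_assoc (1 / 100 : ℝ), mul_inv_cancel₀ hs0.ne', dist_self]
      norm_num
    | succ n ih =>
      obtain ⟨y, h1, h2, h3⟩ := ih
      have hsy : 0 < Real.sqrt (u y) := Real.sqrt_pos.2 (by linarith)
      have hrpos : 0 < (1 / 100) * Real.sqrt (u x₀) * (Real.sqrt (u y))⁻¹ := by positivity
      have hH := H y (by rw [Metric.mem_closedBall]; linarith) h2
      rw [hr y h2] at hH
      obtain ⟨x, hx, hux⟩ := hH (by
        intro z hz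
        rw [Metric.mem_ball] at hz ⊢
        linarith [dist_triangle z y x₀])
      rw [Metric.mem_ball] at hx
      have hle : 5 / 4 * Real.sqrt (u y) ≤ Real.sqrt (u x) := by
        apply Real.le_sqrt_of_sq_le
        rw [mul_pow, Real.sq_sqrt (by linarith)]
        linarith
      have hinv : (Real.sqrt (u x))⁻¹ ≤ 4 / 5 * (Real.sqrt (u y))⁻¹ := by
        calc (Real.sqrt (u x))⁻¹ ≤ (5 / 4 * Real.sqrt (u y))⁻¹ := by gcongr
          _ = _ := by rw [mul_inv]; norm_num
      have hrx : (1 / 100) * Real.sqrt (u x₀) * (Real.sqrt (u x))⁻¹ ≤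
          (1 / 100) * Real.sqrt (u x₀) * (4 / 5 * (Real.sqrt (u y))⁻¹) := by gcongr
      refine ⟨x, by rw [pow_succ]; linarith, by linarith, ?_⟩
      linarith [dist_triangle x y x₀]
  obtain ⟨n, hn⟩ := pow_unbounded_of_one_lt (M / u x₀) (by norm_num : (1 : ℝ) < 2)
  rw [div_lt_iff₀ hpos] at hn
  obtain ⟨y, h1, h2, h3⟩ := key n
  have hrpos : 0 ≤ (1 / 100) * Real.sqrt (u x₀) * (Real.sqrt (u y))⁻¹ := by positivity
  have := hM ⟨y, by rw [Metric.mem_closedBall]; linarith, rfl⟩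
  linarith
end

section
/- Let k ≥ 1 and n ≥ 2 be integers with n even. Let Γ be the group with presentation ⟨x, y | x·y·x⁻¹ = y⁻¹, x^(2^k) = y^n⟩, i.e., the quotient of the free group on two generators x, y by the normal closure of the relators x·y·x⁻¹·y and x^(2^k)·y^(−n). Then the abelianization of Γ is isomorphic to ℤ/2 × ℤ/2^k. -/
theorem zmod_hom_exists {A : Type*} [CommGroup A] (m : ℕ) (a : A) (h : a ^ m = 1) :
    ∃ φ : Multiplicative (ZMod m) →* A, φ (Multiplicative.ofAdd 1) = a := by
  let f : ZMod m →+ Additive A := ZMod.lift m ⟨zmultiplesHom (Additive A) (Additive.ofMul a), by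
    simp only [zmultiplesHom_apply, natCast_zsmul, ← ofMul_pow, h, ofMul_one]⟩
  refine ⟨AddMonoidHom.toMultiplicativeLeft f, ?_⟩
  have h1 : f ((1 : ℤ) : ZMod m) = Additive.ofMul a := by
    simp only [f, ZMod.lift_coe, zmultiplesHom_apply, one_zsmul]
  rw [Int.cast_one] at h1
  exact congrArg Additive.toMul h1

theorem zmod_hom_ext {A : Type*} [Group A] (m : ℕ) (φ ψ : Multiplicative (ZMod m) →* A)
    (h : φ (Multiplicative.ofAdd 1) = ψ (Multiplicative.ofAdd 1)) : φ = ψ := by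
  refine MonoidHom.ext fun z => ?_
  obtain ⟨i, hi⟩ := ZMod.intCast_surjective (Multiplicative.toAdd z)
  have : z = (Multiplicative.ofAdd (1 : ZMod m)) ^ i := by
    rw [← ofAdd_zsmul, zsmul_one, hi, ofAdd_toAdd]
  rw [this, map_zpow, map_zpow, h]

/-- For `k ≥ 1` and even `n ≥ 2`, the abelianization of the group
`⟨x, y | x y x⁻¹ = y⁻¹, x^(2^k) = y^n⟩` is isomorphic to `ℤ/2 × ℤ/2^k`. -/
theorem prism_abelianization_even (k n : ℕ) (hk : 1 ≤ k) (hn : 2 ≤ n) (hne : Even n) :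
    Nonempty
      (Abelianization (PresentedGroup
        ({FreeGroup.of 0 * FreeGroup.of 1 * (FreeGroup.of 0)⁻¹ * FreeGroup.of 1,
          (FreeGroup.of 0) ^ (2 ^ k) * (FreeGroup.of 1) ^ (-(n : ℤ))} :
          Set (FreeGroup (Fin 2)))) ≃*
        Multiplicative (ZMod 2) × Multiplicative (ZMod (2 ^ k))) := by
  set R : Set (FreeGroup (Fin 2)) :=
    {FreeGroup.of 0 * FreeGroup.of 1 * (FreeGroup.of 0)⁻¹ * FreeGroup.of 1,
          (FreeGroup.of 0) ^ (2 ^ k) * (FreeGroup.of 1) ^ (-(n : ℤ))} with hR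
  obtain ⟨j, hj⟩ := hne
  let q : FreeGroup (Fin 2) →* Abelianization (PresentedGroup R) :=
    Abelianization.of.comp (PresentedGroup.mk R)
  have hq : ∀ r ∈ R, q r = 1 := fun r hr => by
    simp only [q, MonoidHom.comp_apply, PresentedGroup.one_of_mem hr, map_one]
  set x := q (FreeGroup.of 0) with hx
  set y := q (FreeGroup.of 1) with hy
  have hy2 : y ^ 2 = 1 := by
    have := hq _ (Set.mem_insert _ _)
    simp only [map_mul, map_inv, ← hx, ← hy] at this
    rw [← this, mul_comm x y, mul_inv_cancel_right, pow_two]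
  have hxk : x ^ (2 ^ k) = 1 := by
    have := hq _ (Set.mem_insert_of_mem _ rfl)
    simp only [map_mul, map_pow, map_zpow, ← hx, ← hy] at this
    rwa [zpow_neg, zpow_natCast, hj, ← two_mul, pow_mul, hy2, one_pow, inv_one, mul_one] at this
  obtain ⟨φ, hφ⟩ := zmod_hom_exists 2 y hy2
  obtain ⟨ψ, hψ⟩ := zmod_hom_exists (2 ^ k) x hxk
  let X : Multiplicative (ZMod 2) × Multiplicative (ZMod (2 ^ k)) := (1, Multiplicative.ofAdd 1)
  let Y : Multiplicative (ZMod 2) × Multiplicative (ZMod (2 ^ k)) := (Multiplicative.ofAdd 1, 1)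
  have hY : Y ^ 2 = 1 := Prod.ext (show (Multiplicative.ofAdd (1 : ZMod 2)) ^ 2 = 1 by decide) (one_pow 2)
  have hX : X ^ (2 ^ k) = 1 := by
    refine Prod.ext (one_pow _) ?_
    change (Multiplicative.ofAdd (1 : ZMod (2 ^ k))) ^ (2 ^ k) = 1
    rw [← ofAdd_nsmul, nsmul_one, ZMod.natCast_self, ofAdd_zero]
  have hrel : ∀ r ∈ R, FreeGroup.lift ![X, Y] r = 1 := by
    intro r hr
    rcases hr with rfl | hr
    · simp only [map_mul, map_inv, FreeGroup.lift_apply_of, Matrix.cons_val_zero,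
        Matrix.cons_val_one]
      rw [mul_comm X Y, mul_inv_cancel_right, ← pow_two, hY]
    · rw [Set.mem_singleton_iff.1 hr]
      simp only [map_mul, map_pow, map_zpow, FreeGroup.lift_apply_of, Matrix.cons_val_zero,
        Matrix.cons_val_one]
      rw [zpow_neg, zpow_natCast, hj, ← two_mul, pow_mul, hY, hX, one_pow, inv_one, mul_one]
  let F : Abelianization (PresentedGroup R) →*
      Multiplicative (ZMod 2) × Multiplicative (ZMod (2 ^ k)) :=
    Abelianization.lift (PresentedGroup.toGroup hrel)
  have hFx : F x = X := by
    change PresentedGroup.toGroup hrel (PresentedGroup.of 0) = X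
    rw [PresentedGroup.toGroup.of]; rfl
  have hFy : F y = Y := by
    change PresentedGroup.toGroup hrel (PresentedGroup.of 1) = Y
    rw [PresentedGroup.toGroup.of]; rfl
  let G := MonoidHom.coprod φ ψ
  have hGX : G X = x := by simp [G, X, MonoidHom.coprod_apply, hψ]
  have hGY : G Y = y := by simp [G, Y, MonoidHom.coprod_apply, hφ]
  refine ⟨MonoidHom.toMulEquiv F G ?_ ?_⟩
  · apply Abelianization.hom_ext
    apply PresentedGroup.ext
    intro i
    fin_cases i
    · change G (F x) = x
      rw [hFx, hGX]
    · change G (F y) = y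
      rw [hFy, hGY]
  · have e1 : (F.comp G).comp (MonoidHom.inl _ _) = MonoidHom.inl _ _ := by
      apply zmod_hom_ext
      change F (G Y) = Y
      rw [hGY, hFy]
    have e2 : (F.comp G).comp (MonoidHom.inr _ _) = MonoidHom.inr _ _ := by
      apply zmod_hom_ext
      change F (G X) = X
      rw [hGX, hFx]
    rw [← MonoidHom.coprod_unique (F.comp G), e1, e2, MonoidHom.coprod_inl_inr]
end

section
/- Let k ≥ 1 and n ≥ 2 be integers with n odd. Let Γ be the group with presentation ⟨x, y | x·y·x⁻¹ = y⁻¹, x^(2^k) = y^n⟩, i.e., the quotient of the free group on two generators x, y by the normal closure of the relators x·y·x⁻¹·y and x^(2^k)·y^(−n). Then the abelianization of Γ is isomorphic to ℤ/2^(k+1). -/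
theorem prism_aux {A : Type*} [CommGroup A] (k n : ℕ) (hno : Odd n) (X Y : A)
    (h1 : X * Y * X⁻¹ * Y = 1) (h2 : X ^ (2 ^ k) * Y ^ (-(n : ℤ)) = 1) :
    X ^ (2 ^ k) = Y ∧ X ^ (2 ^ (k + 1)) = 1 := by
  have hY : Y ^ 2 = 1 := by
    rw [← h1, mul_comm X Y, mul_inv_cancel_right, pow_two]
  have hX : X ^ (2 ^ k) = Y := by
    rw [zpow_neg, zpow_natCast, mul_inv_eq_one] at h2
    obtain ⟨m, rfl⟩ := hno
    rw [h2, pow_succ, pow_mul, hY, one_pow, one_mul]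
  exact ⟨hX, by rw [pow_succ, pow_mul, hX, hY]⟩

/-- For `k ≥ 1` and odd `n ≥ 2`, the abelianization of the group
`⟨x, y | x y x⁻¹ = y⁻¹, x^(2^k) = y^n⟩` is isomorphic to `ℤ/2^(k+1)`. -/
theorem prism_abelianization_odd (k n : ℕ) (hk : 1 ≤ k) (hn : 2 ≤ n) (hno : Odd n) :
    Nonempty
      (Abelianization (PresentedGroup
        ({FreeGroup.of 0 * FreeGroup.of 1 * (FreeGroup.of 0)⁻¹ * FreeGroup.of 1,
          (FreeGroup.of 0) ^ (2 ^ k) * (FreeGroup.of 1) ^ (-(n : ℤ))} :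
          Set (FreeGroup (Fin 2)))) ≃*
        Multiplicative (ZMod (2 ^ (k + 1)))) := by
  set R : Set (FreeGroup (Fin 2)) :=
    {FreeGroup.of 0 * FreeGroup.of 1 * (FreeGroup.of 0)⁻¹ * FreeGroup.of 1,
          (FreeGroup.of 0) ^ (2 ^ k) * (FreeGroup.of 1) ^ (-(n : ℤ))} with hR
  let q : FreeGroup (Fin 2) →* Abelianization (PresentedGroup R) :=
    Abelianization.of.comp (PresentedGroup.mk R)
  have hq : ∀ r ∈ R, q r = 1 := fun r hr => by
    simp only [q, MonoidHom.comp_apply]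
    rw [PresentedGroup.one_of_mem hr, map_one]
  have e1 := hq _ (Or.inl rfl)
  have e2 := hq _ (Or.inr rfl)
  simp only [map_mul, map_inv, map_pow, map_zpow] at e1 e2
  obtain ⟨hX, hX2⟩ := prism_aux k n hno _ _ e1 e2
  have hz : (2 : ZMod (2 ^ (k + 1))) ^ (k + 1) = 0 := by
    have := ZMod.natCast_self (2 ^ (k + 1))
    push_cast at this
    exact this
  let v : Fin 2 → Multiplicative (ZMod (2 ^ (k + 1))) :=
    ![Multiplicative.ofAdd 1, Multiplicative.ofAdd (2 ^ k)]
  have hv : ∀ r ∈ R, FreeGroup.lift v r = 1 := by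
    rintro r (rfl | rfl)
    · simp only [map_mul, map_inv, FreeGroup.lift_apply_of, v]
      apply Multiplicative.toAdd.injective
      simp
      rw [← hz]; ring
    · simp only [map_mul, map_pow, map_zpow, FreeGroup.lift_apply_of, v]
      apply Multiplicative.toAdd.injective
      obtain ⟨m, rfl⟩ := hno
      simp
      linear_combination (-(m : ZMod (2 ^ (k + 1)))) * hz
  let f := Abelianization.lift (PresentedGroup.toGroup hv)
  let g0 : ZMod (2 ^ (k + 1)) →+ Additive (Abelianization (PresentedGroup R)) :=
    ZMod.lift (2 ^ (k + 1)) ⟨zmultiplesHom _ (Additive.ofMul (q (FreeGroup.of 0))), by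
      rw [zmultiplesHom_apply, natCast_zsmul, ← ofMul_pow, hX2]; rfl⟩
  let g : Multiplicative (ZMod (2 ^ (k + 1))) →* Abelianization (PresentedGroup R) :=
    AddMonoidHom.toMultiplicativeLeft g0
  have hg : ∀ m : ℕ, g (Multiplicative.ofAdd (m : ZMod (2 ^ (k + 1)))) = q (FreeGroup.of 0) ^ m := by
    intro m
    have : g0 ((m : ℤ) : ZMod (2 ^ (k + 1))) = Additive.ofMul (q (FreeGroup.of 0) ^ m) := by
      simp only [g0]
      rw [ZMod.lift_coe]
      simp
    rw [Int.cast_natCast] at this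
    exact congrArg Additive.toMul this
  have hf : ∀ i, f (q (FreeGroup.of i)) = v i := fun i => by
    change Abelianization.lift _ (Abelianization.of (PresentedGroup.of i)) = _
    rw [Abelianization.lift_apply_of, PresentedGroup.toGroup.of]
  refine ⟨MonoidHom.toMulEquiv f g ?_ ?_⟩
  · apply Abelianization.hom_ext
    apply PresentedGroup.ext
    intro i
    change g (f (q (FreeGroup.of i))) = q (FreeGroup.of i)
    rw [hf]
    fin_cases i
    · simpa [v] using hg 1
    · have := hg (2 ^ k)
      rw [hX] at this
      simpa [v] using this
  · refine MonoidHom.ext fun x => ?_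
    obtain ⟨m, hm⟩ := ZMod.natCast_zmod_surjective (n := 2 ^ (k + 1)) (Multiplicative.toAdd x)
    obtain rfl : x = Multiplicative.ofAdd (m : ZMod (2 ^ (k + 1))) := by rw [hm]; rfl
    change f (g _) = _
    rw [hg, map_pow, hf]
    change Multiplicative.ofAdd (1 : ZMod (2 ^ (k + 1))) ^ m = _
    rw [← ofAdd_nsmul, nsmul_one]
    rfl
end

section
/- Let k ≥ 1 be an integer. Let Γ be the group with presentation ⟨x, y, z | (x·y)² = x², x² = y², z·x·z⁻¹ = y, z·y·z⁻¹ = x·y, z^(3^k) = 1⟩, i.e., the quotient of the free group on three generators x, y, z by the normal closure of the relators (x·y)²·x⁻², x²·y⁻², z·x·z⁻¹·y⁻¹, z·y·z⁻¹·(x·y)⁻¹, and z^(3^k). Then the abelianization of Γ is isomorphic to ℤ/3^k. -/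
/-- For `k ≥ 1`, the abelianization of the group
`⟨x, y, z | (xy)² = x², x² = y², zxz⁻¹ = y, zyz⁻¹ = xy, z^(3^k) = 1⟩`
is isomorphic to `ℤ/3^k`. -/
theorem tetrahedral_abelianization (k : ℕ) (hk : 1 ≤ k) :
    Nonempty
      (Abelianization (PresentedGroup
        ({(FreeGroup.of 0 * FreeGroup.of 1) ^ 2 * ((FreeGroup.of 0) ^ 2)⁻¹,
          (FreeGroup.of 0) ^ 2 * ((FreeGroup.of 1) ^ 2)⁻¹,
          FreeGroup.of 2 * FreeGroup.of 0 * (FreeGroup.of 2)⁻¹ * (FreeGroup.of 1)⁻¹,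
          FreeGroup.of 2 * FreeGroup.of 1 * (FreeGroup.of 2)⁻¹ *
            (FreeGroup.of 0 * FreeGroup.of 1)⁻¹,
          (FreeGroup.of 2) ^ (3 ^ k)} :
          Set (FreeGroup (Fin 3)))) ≃*
        Multiplicative (ZMod (3 ^ k))) := by
  generalize hR : ({(FreeGroup.of 0 * FreeGroup.of 1) ^ 2 * ((FreeGroup.of 0) ^ 2)⁻¹,
          (FreeGroup.of 0) ^ 2 * ((FreeGroup.of 1) ^ 2)⁻¹,
          FreeGroup.of 2 * FreeGroup.of 0 * (FreeGroup.of 2)⁻¹ * (FreeGroup.of 1)⁻¹,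
          FreeGroup.of 2 * FreeGroup.of 1 * (FreeGroup.of 2)⁻¹ *
            (FreeGroup.of 0 * FreeGroup.of 1)⁻¹,
          (FreeGroup.of 2) ^ (3 ^ k)} :
          Set (FreeGroup (Fin 3))) = R
  let g : Fin 3 → Multiplicative (ZMod (3 ^ k)) := ![1, 1, Multiplicative.ofAdd 1]
  have hg : ∀ r ∈ R, FreeGroup.lift g r = 1 := by
    intro r hr
    rw [← hR] at hr
    simp only [Set.mem_insert_iff, Set.mem_singleton_iff] at hr
    rcases hr with rfl | rfl | rfl | rfl | rfl
    · simp [g]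
    · simp [g]
    · simp [g]
    · simp [g]
    · simp only [map_pow, FreeGroup.lift_apply_of]
      change Multiplicative.ofAdd (1 : ZMod (3 ^ k)) ^ (3 ^ k) = 1
      rw [← ofAdd_nsmul, nsmul_one, ZMod.natCast_self, ofAdd_zero]
  let f : Abelianization (PresentedGroup R) →* Multiplicative (ZMod (3 ^ k)) :=
    Abelianization.lift (PresentedGroup.toGroup hg)
  let h : FreeGroup (Fin 3) →* Abelianization (PresentedGroup R) :=
    Abelianization.of.comp (PresentedGroup.mk R)
  have hs : Function.Surjective h :=
    (QuotientGroup.mk_surjective).comp (PresentedGroup.mk_surjective R)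
  have h1 : ∀ r ∈ R, h r = 1 := by
    intro r hr
    have : PresentedGroup.mk R r = 1 := PresentedGroup.one_of_mem hr
    simp [h, this]
  have hf : f (h (FreeGroup.of 2)) = Multiplicative.ofAdd 1 := by
    change PresentedGroup.toGroup hg (PresentedGroup.of 2) = _
    rw [PresentedGroup.toGroup.of]
    rfl
  have e3 := h1 (FreeGroup.of 2 * FreeGroup.of 0 * (FreeGroup.of 2)⁻¹ * (FreeGroup.of 1)⁻¹)
    (by rw [← hR]; simp)
  have e4 := h1 (FreeGroup.of 2 * FreeGroup.of 1 * (FreeGroup.of 2)⁻¹ *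
            (FreeGroup.of 0 * FreeGroup.of 1)⁻¹) (by rw [← hR]; simp)
  have e5 := h1 ((FreeGroup.of 2) ^ (3 ^ k)) (by rw [← hR]; simp)
  simp only [map_mul, map_inv, map_pow] at e3 e4 e5
  rw [mul_inv_eq_one, mul_inv_cancel_comm] at e3 e4
  have e0 : h (FreeGroup.of 0) = 1 := by simpa using e4
  have e1 : h (FreeGroup.of 1) = 1 := by rw [← e3, e0]
  have hz : ∀ w, h w ∈ Subgroup.zpowers (h (FreeGroup.of 2)) := by
    intro w
    have hi : ∀ i, h (FreeGroup.of i) ∈ Subgroup.zpowers (h (FreeGroup.of 2)) := by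
      intro i
      fin_cases i
      · simp [e0]
      · simp [e1]
      · exact Subgroup.mem_zpowers _
    induction w using FreeGroup.induction_on with
    | C1 => simp
    | of i => exact hi i
    | inv_of i _ => rw [map_inv]; exact inv_mem (hi i)
    | mul a b ha hb => rw [map_mul]; exact mul_mem ha hb
  refine ⟨MulEquiv.ofBijective f ⟨?_, ?_⟩⟩
  · rw [injective_iff_map_eq_one]
    intro a ha
    obtain ⟨w, rfl⟩ := hs a
    obtain ⟨n, hn⟩ := Subgroup.mem_zpowers_iff.1 (hz w)
    rw [← hn, map_zpow, hf, ← ofAdd_zsmul, ofAdd_eq_one, zsmul_one,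
      ZMod.intCast_zmod_eq_zero_iff_dvd] at ha
    obtain ⟨m, rfl⟩ := ha
    rw [← hn, zpow_mul, zpow_natCast, e5, one_zpow]
  · intro b
    obtain ⟨n, hn⟩ := ZMod.intCast_surjective (Multiplicative.toAdd b)
    refine ⟨h (FreeGroup.of 2) ^ n, ?_⟩
    rw [map_zpow, hf, ← ofAdd_zsmul, zsmul_one, hn, ofAdd_toAdd]
end

section
/- Let Γ be the group with presentation ⟨x, y | (x·y)² = x³, x³ = y⁴⟩, i.e., the quotient of the free group on two generators x, y by the normal closure of the relators (x·y)²·x⁻³ and x³·y⁻⁴. Then the abelianization of Γ is isomorphic to ℤ/2. -/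
/-- Abelian consequence of the relators. -/
theorem oct_aux {A : Type*} [CommGroup A] (x y : A) (h1 : (x * y) ^ 2 * (x ^ 3)⁻¹ = 1)
    (h2 : x ^ 3 * (y ^ 4)⁻¹ = 1) : x = 1 ∧ y ^ 2 = 1 := by
  have h1' : (x * y) ^ 2 = x ^ 3 := mul_inv_eq_one.mp h1
  have h2' : x ^ 3 = y ^ 4 := mul_inv_eq_one.mp h2
  have hx : y ^ 2 = x := by
    rw [mul_pow, pow_succ x 2] at h1'
    exact mul_left_cancel h1'
  have h3 : x = 1 := by
    have h4 : y ^ 4 = x ^ 2 := by rw [← hx, ← pow_mul]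
    rw [h4, pow_succ x 2] at h2'
    exact mul_eq_left.mp h2'
  exact ⟨h3, hx.trans h3⟩

/-- The abelianization of the binary octahedral group `⟨x, y | (xy)² = x³, x³ = y⁴⟩`
is isomorphic to `ℤ/2`. -/
theorem octahedral_abelianization :
    Nonempty
      (Abelianization (PresentedGroup
        ({(FreeGroup.of 0 * FreeGroup.of 1) ^ 2 * ((FreeGroup.of 0) ^ 3)⁻¹,
          (FreeGroup.of 0) ^ 3 * ((FreeGroup.of 1) ^ 4)⁻¹} :
          Set (FreeGroup (Fin 2)))) ≃*
        Multiplicative (ZMod 2)) := by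
  set S : Set (FreeGroup (Fin 2)) :=
    {(FreeGroup.of 0 * FreeGroup.of 1) ^ 2 * ((FreeGroup.of 0) ^ 3)⁻¹,
          (FreeGroup.of 0) ^ 3 * ((FreeGroup.of 1) ^ 4)⁻¹} with hS
  let q : FreeGroup (Fin 2) →* Abelianization (PresentedGroup S) :=
    Abelianization.of.comp (PresentedGroup.mk S)
  have hq : ∀ r ∈ S, q r = 1 := by
    intro r hr
    have : PresentedGroup.mk S r = 1 := PresentedGroup.one_of_mem hr
    simp [q, this]
  have h1 := hq _ (Or.inl rfl)
  have h2 := hq _ (Or.inr rfl)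
  simp only [map_mul, map_pow, map_inv] at h1 h2
  obtain ⟨hx, hy⟩ := oct_aux _ _ h1 h2
  have hf : ∀ r ∈ S, FreeGroup.lift
      (![1, Multiplicative.ofAdd 1] : Fin 2 → Multiplicative (ZMod 2)) r = 1 := by
    intro r hr
    rcases hr with rfl | rfl <;> simp <;> decide
  let f : Abelianization (PresentedGroup S) →* Multiplicative (ZMod 2) :=
    Abelianization.lift (PresentedGroup.toGroup hf)
  have f0 : f (q (FreeGroup.of 0)) = 1 := by
    change FreeGroup.lift (![1, Multiplicative.ofAdd 1] : Fin 2 → Multiplicative (ZMod 2))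
      (FreeGroup.of 0) = _
    simp
  have f1 : f (q (FreeGroup.of 1)) = Multiplicative.ofAdd 1 := by
    change FreeGroup.lift (![1, Multiplicative.ofAdd 1] : Fin 2 → Multiplicative (ZMod 2))
      (FreeGroup.of 1) = _
    simp
  have key : ∀ w, q w = 1 ∨ q w = q (FreeGroup.of 1) := by
    have hyy : q (FreeGroup.of 1) * q (FreeGroup.of 1) = 1 := by rw [← sq, hy]
    have hg : ∀ i : Fin 2, q (FreeGroup.of i) = 1 ∨ q (FreeGroup.of i) = q (FreeGroup.of 1) := by
      intro i
      fin_cases i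
      · exact Or.inl hx
      · exact Or.inr rfl
    intro w
    induction w using FreeGroup.induction_on with
    | C1 => left; exact map_one q
    | of i => exact hg i
    | inv_of i h =>
      rw [map_inv]
      rcases h with h | h
      · left; rw [h, inv_one]
      · right; rw [h]; exact inv_eq_of_mul_eq_one_left hyy
    | mul a b ha hb =>
      rw [map_mul]
      rcases ha with h | h <;> rcases hb with h' | h' <;> rw [h, h'] <;> simp [hyy]
  refine ⟨MulEquiv.ofBijective f ⟨?_, ?_⟩⟩
  · rw [injective_iff_map_eq_one]
    intro a ha
    obtain ⟨p, rfl⟩ := QuotientGroup.mk_surjective a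
    obtain ⟨w, rfl⟩ := PresentedGroup.mk_surjective S p
    change f (q w) = 1 at ha
    change q w = 1
    rcases key w with h | h
    · exact h
    · rw [h, f1] at ha
      exact absurd ha (by decide)
  · intro b
    have : b = 1 ∨ b = Multiplicative.ofAdd 1 := by
      revert b; decide
    rcases this with rfl | rfl
    · exact ⟨1, map_one f⟩
    · exact ⟨_, f1⟩
end
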